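/- For every m ≥ 1 and every p ∈ (0,1), the matrix W_m^n converges entrywise to (1/(m+1))·J_m as n → ∞, where J_m is the (m+1)×(m+1) all-ones matrix; moreover the error is O((1−2pq)ⁿ). -/

import Mathlib

open Matrix Filter

/-!
The generating polynomial of row `i` of `W` is `q Mⁱ + p Xⁱ Mᵐ⁻ⁱ` with `M = q X + p`. Since
`p + q = 1`, we have `1 - M = q (1 - X)` and `M - X = p (1 - X)`. Hence

* the sum of the row polynomials times `1 - X` telescopes to `1 - Xᵐ⁺¹`, so `W` has unit column
  sums;
* consecutive row polynomials differ by `(X - 1) (q² Mⁱ + p² Xⁱ Mᵐ⁻¹⁻ⁱ)`. The second factor has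
  nonnegative coefficients with sum `p² + q² = 1 - 2pq`, so, by summation by parts, `W` contracts
  the largest jump `|f (i + 1) - f i|` of a vector `f` by the factor `1 - 2pq`.

So within a column of `Wⁿ` neighbouring entries differ by at most `(1 - 2pq)ⁿ`, while their average
is `1 / (m + 1)`.
-/

open Polynomial
open scoped BigOperators

section GeneratingPolynomial

variable {R : Type*}

/-- The generating polynomial of one Bernoulli trial with failure weight `p` and success
weight `q`; its `n`-th power generates the number of successes in `n` independent trials. -/
noncomputable def trialPoly [Semiring R] (p q : R) : R[X] :=
  C q * X + C p

/-- For `i ≤ n`, the mixture with weights `a` and `b` of the generating polynomials of the number of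
successes in `i` trials and of `i` plus the number of successes in `n - i` trials. The rows of `W_m`
have the weights `q` and `p`; up to the factor `X - 1`, their differences have the weights `q ^ 2`
and `p ^ 2`. -/
noncomputable def mixPoly [Semiring R] (p q a b : R) (n i : ℕ) : R[X] :=
  C a * trialPoly p q ^ i + C b * (X ^ i * trialPoly p q ^ (n - i))

lemma coeff_trialPoly_pow [CommSemiring R] (p q : R) (n k : ℕ) :
    (trialPoly p q ^ n).coeff k = n.choose k * p ^ (n - k) * q ^ k := by
  have hterm (j : ℕ) : (C q * X) ^ j * C p ^ (n - j) * (n.choose j : R[X])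
      = C (n.choose j * p ^ (n - j) * q ^ j) * X ^ j := by
    simp only [map_mul, map_pow, map_natCast]
    ring
  simp only [trialPoly, add_pow, hterm, finsetSum_coeff, coeff_C_mul_X_pow]
  rw [Finset.sum_ite_eq, ite_eq_left_iff]
  intro hk
  rw [Nat.choose_eq_zero_of_lt (by simpa using hk)]
  simp

lemma coeff_mixPoly [CommSemiring R] (p q a b : R) (n i k : ℕ) :
    (mixPoly p q a b n i).coeff k
      = a * (i.choose k * p ^ (i - k) * q ^ k)
        + b * if i ≤ k then
            (n - i).choose (k - i) * p ^ (n - i - (k - i)) * q ^ (k - i) else 0 := by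
  simp only [mixPoly, coeff_add, coeff_C_mul, coeff_X_pow_mul', coeff_trialPoly_pow]

lemma coeff_mixPoly_nonneg [CommSemiring R] [PartialOrder R] [IsOrderedRing R] {p q a b : R}
    (hp : 0 ≤ p) (hq : 0 ≤ q) (ha : 0 ≤ a) (hb : 0 ≤ b) (n i k : ℕ) :
    0 ≤ (mixPoly p q a b n i).coeff k := by
  rw [coeff_mixPoly]
  split_ifs <;> positivity

lemma natDegree_mixPoly_le [CommSemiring R] (p q a b : R) {n i : ℕ} (hi : i ≤ n) :
    (mixPoly p q a b n i).natDegree ≤ n := by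
  have htrial (k : ℕ) : (trialPoly p q ^ k).natDegree ≤ k := by
    simpa [trialPoly] using natDegree_pow_le_of_le k (natDegree_linear_le (a := q) (b := p))
  refine natDegree_add_le_of_degree_le ((natDegree_C_mul_le _ _).trans ((htrial i).trans hi)) ?_
  refine (natDegree_C_mul_le _ _).trans ?_
  have := natDegree_mul_le_of_le (natDegree_X_pow_le (R := R) i) (htrial (n - i))
  rwa [Nat.add_sub_cancel' hi] at this

lemma eval_one_mixPoly [CommSemiring R] {p q : R} (h : p + q = 1) (a b : R) (n i : ℕ) :
    (mixPoly p q a b n i).eval 1 = a + b := by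
  simp [mixPoly, trialPoly, add_comm q p, h]

lemma one_sub_trialPoly [CommRing R] {p q : R} (h : p + q = 1) :
    1 - trialPoly p q = C q * (1 - X) := by
  have hC : C p + C q = 1 := by rw [← C_add, h, C_1]
  rw [trialPoly]
  linear_combination -hC

lemma trialPoly_sub_X [CommRing R] {p q : R} (h : p + q = 1) :
    trialPoly p q - X = C p * (1 - X) := by
  have hC : C p + C q = 1 := by rw [← C_add, h, C_1]
  rw [trialPoly]
  linear_combination X * hC

lemma mixPoly_succ_sub [CommRing R] {p q : R} (h : p + q = 1) {n i : ℕ} (hi : i ≤ n) :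
    mixPoly p q q p (n + 1) (i + 1) - mixPoly p q q p (n + 1) i
      = (X - 1) * mixPoly p q (q ^ 2) (p ^ 2) n i := by
  simp only [mixPoly, Nat.add_sub_add_right, Nat.succ_sub hi, pow_succ _ i, pow_succ _ (n - i),
    map_pow]
  linear_combination -C q * trialPoly p q ^ i * one_sub_trialPoly h
    - C p * X ^ i * trialPoly p q ^ (n - i) * trialPoly_sub_X h

lemma sum_mixPoly [CommRing R] {p q : R} (h : p + q = 1) (n : ℕ) :
    ∑ i ∈ Finset.range (n + 1), mixPoly p q q p n i = ∑ i ∈ Finset.range (n + 1), X ^ i := by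
  refine (monic_X_sub_C (1 : R)).isRegular.right ?_
  have hlower : (C q * ∑ i ∈ Finset.range (n + 1), trialPoly p q ^ i) * (X - 1)
      = trialPoly p q ^ (n + 1) - 1 := by
    rw [← geom_sum_mul, mul_right_comm, mul_comm (C q * _)]
    linear_combination (∑ i ∈ Finset.range (n + 1), trialPoly p q ^ i) * one_sub_trialPoly h
  have hupper : (C p * ∑ i ∈ Finset.range (n + 1), X ^ i * trialPoly p q ^ (n - i)) * (X - 1)
      = X ^ (n + 1) - trialPoly p q ^ (n + 1) := by
    rw [← geom_sum₂_mul, Nat.add_sub_cancel]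
    linear_combination (∑ i ∈ Finset.range (n + 1), X ^ i * trialPoly p q ^ (n - i))
      * trialPoly_sub_X h
  simp only [mixPoly, Finset.sum_add_distrib, ← Finset.mul_sum, C_1, add_mul]
  rw [hlower, hupper, geom_sum_mul]
  ring

end GeneratingPolynomial

section FiniteSequences

lemma sum_coeff_X_sub_one_mul {R : Type*} [Ring R] {m : ℕ} {P : R[X]} (hP : P.degree < m)
    (f : Fin (m + 1) → R) :
    ∑ j, ((X - 1) * P).coeff j * f j = ∑ k : Fin m, P.coeff k * (f k.succ - f k.castSucc) := by
  simp only [sub_mul, one_mul, coeff_sub, mul_sub, Finset.sum_sub_distrib]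
  congr 1
  · simp [Fin.sum_univ_succ]
  · simp [Fin.sum_univ_castSucc, coeff_eq_zero_of_degree_lt hP]

lemma abs_sub_le_sub_nsmul_of_abs_succ_sub_le {G : Type*} [AddCommGroup G] [LinearOrder G]
    [IsOrderedAddMonoid G] {m : ℕ} {f : Fin (m + 1) → G} {c : G}
    (hf : ∀ k : Fin m, |f k.succ - f k.castSucc| ≤ c) {i j : Fin (m + 1)} (hji : j ≤ i) :
    |f i - f j| ≤ ((i : ℕ) - j) • c := by
  induction i using Fin.induction with
  | zero => simp [Fin.le_zero_iff.1 hji]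
  | succ k ih =>
    rcases hji.eq_or_lt with rfl | hjk
    · simp
    have hjk : j ≤ k.castSucc := Fin.le_castSucc_iff.2 hjk
    have hsub : (k.succ : ℕ) - j = (k.castSucc : ℕ) - j + 1 := Nat.sub_add_comm hjk
    calc |f k.succ - f j| ≤ |f k.succ - f k.castSucc| + |f k.castSucc - f j| := abs_sub_le _ _ _
      _ ≤ c + ((k.castSucc : ℕ) - j) • c := add_le_add (hf k) (ih hjk)
      _ = ((k.succ : ℕ) - j) • c := by rw [hsub, succ_nsmul']

lemma abs_sub_le_nsmul_of_abs_succ_sub_le {G : Type*} [AddCommGroup G] [LinearOrder G]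
    [IsOrderedAddMonoid G] {m : ℕ} {f : Fin (m + 1) → G} {c : G}
    (hf : ∀ k : Fin m, |f k.succ - f k.castSucc| ≤ c) (i j : Fin (m + 1)) :
    |f i - f j| ≤ m • c := by
  wlog hji : j ≤ i generalizing i j
  · rw [abs_sub_comm]
    exact this j i (le_of_not_ge hji)
  rcases m.eq_zero_or_pos with rfl | hm
  · simp [Subsingleton.elim (α := Fin 1) i j]
  have hc : 0 ≤ c := (abs_nonneg _).trans (hf ⟨0, hm⟩)
  exact (abs_sub_le_sub_nsmul_of_abs_succ_sub_le hf hji).trans (nsmul_le_nsmul_left hc (by lia))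

lemma abs_sub_expect_le {ι G : Type*} [Fintype ι] [AddCommGroup G] [LinearOrder G]
    [IsOrderedAddMonoid G] [Module ℚ≥0 G] [PosSMulMono ℚ≥0 G] (f : ι → G) {i : ι} {c : G}
    (hf : ∀ j, |f i - f j| ≤ c) : |f i - 𝔼 j, f j| ≤ c := by
  have : Nonempty ι := ⟨i⟩
  calc |f i - 𝔼 j, f j| = |𝔼 j, (f i - f j)| := by
        rw [Finset.expect_sub_distrib, Fintype.expect_const]
    _ ≤ 𝔼 j, |f i - f j| := Finset.abs_expect_le _ _
    _ ≤ c := Finset.expect_le Finset.univ_nonempty fun j _ => hf j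

end FiniteSequences

section TransitionMatrix

variable {R : Type*}

/-- The matrix `W_m`, with row `i` given by its generating polynomial. -/
noncomputable def mixMatrix [Semiring R] (p q : R) (m : ℕ) :
    Matrix (Fin (m + 1)) (Fin (m + 1)) R :=
  of fun i j => (mixPoly p q q p m i).coeff j

lemma mixMatrix_apply [CommSemiring R] (p q : R) {m : ℕ} (i j : Fin (m + 1)) :
    mixMatrix p q m i j
      = (if (j : ℕ) ≤ i then
          (i : ℕ).choose (i - j) * p ^ ((i : ℕ) - j) * q ^ ((j : ℕ) + 1) else 0)
        + if (i : ℕ) ≤ j then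
          (m - i).choose (j - i) * p ^ (m + 1 - j) * q ^ ((j : ℕ) - i) else 0 := by
  rw [mixMatrix, of_apply, coeff_mixPoly]
  congr 1
  · split_ifs with hji
    · rw [Nat.choose_symm hji]
      ring
    · simp [Nat.choose_eq_zero_of_lt (not_le.1 hji)]
  · split_ifs with hij
    · rw [show m - (i : ℕ) - (j - i) = m - j by lia,
        Nat.sub_add_comm (Nat.lt_succ_iff.1 j.2)]
      ring
    · rw [mul_zero]

lemma mixMatrix_mem_colStochastic [CommRing R] [PartialOrder R] [IsOrderedRing R] {p q : R}
    (hp : 0 ≤ p) (hq : 0 ≤ q) (h : p + q = 1) (m : ℕ) :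
    mixMatrix p q m ∈ colStochastic R (Fin (m + 1)) := by
  refine mem_colStochastic_iff_sum.2 ⟨fun i j => coeff_mixPoly_nonneg hp hq hq hp m i j,
    fun j => ?_⟩
  calc ∑ i, mixMatrix p q m i j
      = (∑ i ∈ Finset.range (m + 1), mixPoly p q q p m i).coeff j := by
        rw [finsetSum_coeff, ← Fin.sum_univ_eq_sum_range (fun i => (mixPoly p q q p m i).coeff j)]
        rfl
    _ = 1 := by
      rw [sum_mixPoly h, finsetSum_coeff]
      simp only [coeff_X_pow]
      rw [Finset.sum_ite_eq, if_pos (Finset.mem_range.2 j.2)]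

lemma mixMatrix_mulVec_succ_sub [CommRing R] {p q : R} (h : p + q = 1) {m : ℕ}
    (f : Fin (m + 1) → R) (i : Fin m) :
    (mixMatrix p q m *ᵥ f) i.succ - (mixMatrix p q m *ᵥ f) i.castSucc
      = ∑ k : Fin m, (mixPoly p q (q ^ 2) (p ^ 2) (m - 1) i).coeff k
          * (f k.succ - f k.castSucc) := by
  obtain ⟨n, rfl⟩ : ∃ n, m = n + 1 := Nat.exists_eq_succ_of_ne_zero i.pos.ne'
  have hi : (i : ℕ) ≤ n := Nat.lt_succ_iff.1 i.2
  rw [← sum_coeff_X_sub_one_mul, Nat.add_sub_cancel, ← mixPoly_succ_sub h hi]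
  · simp [mixMatrix, mulVec, dotProduct, sub_mul, Finset.sum_sub_distrib]
  · exact degree_le_of_natDegree_le (natDegree_mixPoly_le p q _ _ hi) |>.trans_lt
      (by exact_mod_cast Nat.lt_succ_self n)

lemma abs_mixMatrix_mulVec_succ_sub_le [CommRing R] [LinearOrder R] [IsOrderedRing R] {p q : R}
    (hp : 0 ≤ p) (hq : 0 ≤ q) (h : p + q = 1) {m : ℕ} {f : Fin (m + 1) → R} {c : R}
    (hf : ∀ k : Fin m, |f k.succ - f k.castSucc| ≤ c) (i : Fin m) :
    |(mixMatrix p q m *ᵥ f) i.succ - (mixMatrix p q m *ᵥ f) i.castSucc|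
      ≤ (p ^ 2 + q ^ 2) * c := by
  set P := mixPoly p q (q ^ 2) (p ^ 2) (m - 1) i
  have hP (k : ℕ) : 0 ≤ P.coeff k :=
    coeff_mixPoly_nonneg hp hq (sq_nonneg q) (sq_nonneg p) (m - 1) i k
  have hdeg : P.natDegree < m :=
    (natDegree_mixPoly_le p q _ _ (Nat.le_sub_one_of_lt i.2)).trans_lt
      (Nat.sub_one_lt i.pos.ne')
  have hsum : ∑ k : Fin m, P.coeff k = p ^ 2 + q ^ 2 := by
    rw [add_comm, ← eval_one_mixPoly h (q ^ 2) (p ^ 2) (m - 1) i, eval_eq_sum_range' hdeg,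
      Fin.sum_univ_eq_sum_range P.coeff]
    simp [P]
  calc |(mixMatrix p q m *ᵥ f) i.succ - (mixMatrix p q m *ᵥ f) i.castSucc|
      = |∑ k : Fin m, P.coeff k * (f k.succ - f k.castSucc)| := by
        rw [mixMatrix_mulVec_succ_sub h]
    _ ≤ ∑ k : Fin m, |P.coeff k * (f k.succ - f k.castSucc)| := Finset.abs_sum_le_sum_abs _ _
    _ ≤ ∑ k : Fin m, P.coeff k * c := by
        refine Finset.sum_le_sum fun k _ => ?_
        rw [abs_mul, abs_of_nonneg (hP k)]
        exact mul_le_mul_of_nonneg_left (hf k) (hP k)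
    _ = (p ^ 2 + q ^ 2) * c := by rw [← Finset.sum_mul, hsum]

lemma abs_mixMatrix_pow_succ_sub_le [CommRing R] [LinearOrder R] [IsOrderedRing R] {p q : R}
    (hp : 0 ≤ p) (hq : 0 ≤ q) (h : p + q = 1) {m : ℕ} (n : ℕ) (i : Fin m) (j : Fin (m + 1)) :
    |(mixMatrix p q m ^ n) i.succ j - (mixMatrix p q m ^ n) i.castSucc j|
      ≤ (p ^ 2 + q ^ 2) ^ n := by
  induction n generalizing i with
  | zero =>
    simp only [pow_zero, one_apply]
    split_ifs <;> simp
  | succ n ih =>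
    rw [pow_succ', pow_succ']
    exact abs_mixMatrix_mulVec_succ_sub_le hp hq h ih i

lemma abs_mixMatrix_pow_sub_le {K : Type*} [Field K] [LinearOrder K]
    [IsStrictOrderedRing K] {p q : K} (hp : 0 ≤ p) (hq : 0 ≤ q) (h : p + q = 1) {m : ℕ}
    (n : ℕ) (i j : Fin (m + 1)) :
    |(mixMatrix p q m ^ n) i j - 1 / (m + 1)| ≤ m * (p ^ 2 + q ^ 2) ^ n := by
  have hcol : ∑ k, (mixMatrix p q m ^ n) k j = 1 :=
    sum_col_of_mem_colStochastic (pow_mem (mixMatrix_mem_colStochastic hp hq h m) n) j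
  have hmean : 𝔼 k, (mixMatrix p q m ^ n) k j = 1 / (m + 1) := by
    rw [Fintype.expect_eq_sum_div_card, hcol, Fintype.card_fin, Nat.cast_add_one]
  have hosc (k : Fin (m + 1)) : |(mixMatrix p q m ^ n) i j - (mixMatrix p q m ^ n) k j|
      ≤ m • (p ^ 2 + q ^ 2) ^ n :=
    abs_sub_le_nsmul_of_abs_succ_sub_le (f := fun k => (mixMatrix p q m ^ n) k j)
      (fun k => abs_mixMatrix_pow_succ_sub_le hp hq h n k j) i k
  rw [← hmean, ← nsmul_eq_mul]
  exact abs_sub_expect_le (fun k => (mixMatrix p q m ^ n) k j) hosc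

end TransitionMatrix

/-- `W_mⁿ` converges entrywise to `(1/(m+1)) J_m`, with error `O((1-2pq)ⁿ)`. -/
theorem Wm_pow_tendsto (p : ℝ) (hp : p ∈ Set.Ioo (0:ℝ) 1) (q : ℝ) (hq : q = 1 - p)
    (m : ℕ) (hm : 1 ≤ m)
    (L U W : Matrix (Fin (m + 1)) (Fin (m + 1)) ℝ)
    (hL : ∀ i j : Fin (m + 1),
      L i j = if (j : ℕ) ≤ (i : ℕ) then ((i : ℕ).choose ((i : ℕ) - (j : ℕ)) : ℝ)
        * p ^ ((i : ℕ) - (j : ℕ)) * q ^ ((j : ℕ) + 1) else 0)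
    (hU : ∀ i j : Fin (m + 1),
      U i j = if (i : ℕ) ≤ (j : ℕ) then ((m - (i : ℕ)).choose ((j : ℕ) - (i : ℕ)) : ℝ)
        * p ^ (m + 1 - (j : ℕ)) * q ^ ((j : ℕ) - (i : ℕ)) else 0)
    (hW : W = L + U) :
    (∀ i j : Fin (m + 1),
      Tendsto (fun n : ℕ => (W ^ n) i j) atTop (nhds (1 / (m + 1 : ℝ)))) ∧
    ∃ Cbd : ℝ, ∀ (n : ℕ) (i j : Fin (m + 1)),
      |(W ^ n) i j - 1 / (m + 1 : ℝ)| ≤ Cbd * (1 - 2 * p * q) ^ n := by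
  have hpq : p + q = 1 := by linarith
  have hp0 : 0 < p := hp.1
  have hq0 : 0 < q := by linarith [hp.2]
  have hWmix : W = mixMatrix p q m := by
    ext i j
    rw [hW, Matrix.add_apply, hL, hU, mixMatrix_apply]
  have hrate : p ^ 2 + q ^ 2 = 1 - 2 * p * q := by rw [hq]; ring
  have hbound (n : ℕ) (i j : Fin (m + 1)) :
      |(W ^ n) i j - 1 / (m + 1 : ℝ)| ≤ m * (1 - 2 * p * q) ^ n := by
    rw [hWmix, ← hrate]
    exact abs_mixMatrix_pow_sub_le hp0.le hq0.le hpq n i j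
  have hlt : 1 - 2 * p * q < 1 := by linarith [mul_pos hp0 hq0]
  have hlim : Tendsto (fun n : ℕ => m * (1 - 2 * p * q) ^ n) atTop (nhds 0) := by
    simpa using (tendsto_pow_atTop_nhds_zero_of_lt_one (hrate ▸ by positivity) hlt).const_mul
      (m : ℝ)
  exact ⟨fun i j => tendsto_iff_dist_tendsto_zero.2 <|
    squeeze_zero (fun _ => dist_nonneg) (fun n => hbound n i j) hlim, m, hbound⟩
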